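/- arXiv:2008.03204 — 2 statements merged into one kernel-verified Lean document; each statement's English description precedes it below -/
import Mathlib

section
/- Let 0 < H < 1/2, ζ > 0, p > 1, C > 0. As t → 0⁺, ∫₀ᵗ K(s)² ds ∼ ( C² ζ^{−2p} / (2H) ) · (log(1/t))^{−2p} · t^{2H}; in particular, the standard deviation s(t) := ( ∫₀ᵗ K(s)² ds )^{1/2} is regularly varying at 0 with index H. -/
open MeasureTheory Filter

/-- The log-modulated kernel `K(r) = C r^{H-1/2} max(ζ log(1/r), 1)^{-p}`. -/
noncomputable def logKernel (H ζ p C r : ℝ) : ℝ :=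
  C * r ^ (H - 1/2) * (max (ζ * Real.log (1 / r)) 1) ^ (-p)

/-- The standard deviation `s(t) = (∫₀ᵗ K(s)² ds)^{1/2}`. -/
noncomputable def sdev (H ζ p C t : ℝ) : ℝ :=
  Real.sqrt (∫ s in (0 : ℝ)..t, (logKernel H ζ p C s) ^ 2)

open Topology

theorem aux_log : Tendsto (fun t : ℝ => Real.log (1 / t)) (𝓝[>] 0) atTop := by
  simp only [one_div]
  exact Real.tendsto_log_atTop.comp tendsto_inv_nhdsGT_zero

theorem aux_sq (H ζ p C r : ℝ) (hr : 0 < r) :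
    (logKernel H ζ p C r) ^ 2
      = C ^ 2 * r ^ (2 * H - 1) * (max (ζ * Real.log (1 / r)) 1) ^ (-(2 * p)) := by
  have hm : 0 ≤ max (ζ * Real.log (1 / r)) 1 := le_trans zero_le_one (le_max_right _ _)
  unfold logKernel
  rw [mul_pow, mul_pow, ← Real.rpow_mul_natCast hr.le, ← Real.rpow_mul_natCast hm]
  congr 3
  · push_cast; ring
  · push_cast; ring

theorem aux_cont (H ζ p C : ℝ) : 
    ContinuousOn (fun r => (logKernel H ζ p C r) ^ 2) (Set.Ioi 0) := by
  unfold logKernel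
  intro r hr
  have hr : 0 < r := hr
  have hm : 0 < max (ζ * Real.log (1 / r)) 1 := lt_of_lt_of_le zero_lt_one (le_max_right _ _)
  apply ContinuousAt.continuousWithinAt
  have h1 : ContinuousAt (fun r : ℝ => r ^ (H - 1/2)) r :=
    Real.continuousAt_rpow_const _ _ (Or.inl hr.ne')
  have h2 : ContinuousAt (fun r : ℝ => Real.log (1 / r)) r := by
    apply ContinuousAt.log
    · exact continuousAt_const.div continuousAt_id hr.ne'
    · positivity
  have h3 : ContinuousAt (fun r : ℝ => max (ζ * Real.log (1 / r)) 1) r :=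
    (continuousAt_const.mul h2).max continuousAt_const
  exact ((continuousAt_const.mul h1).mul (h3.rpow_const (Or.inl hm.ne'))).pow 2

theorem aux_int (H ζ p C : ℝ) (hH0 : 0 < H) (hp : 1 < p) (t : ℝ) (ht : 0 < t) :
    IntervalIntegrable (fun r => (logKernel H ζ p C r) ^ 2) volume 0 t := by
  have hb : IntervalIntegrable (fun r : ℝ => C ^ 2 * r ^ (2 * H - 1)) volume 0 t :=
    (intervalIntegral.intervalIntegrable_rpow' (by linarith)).const_mul _
  refine hb.mono_fun ?_ ?_
  · rw [Set.uIoc_of_le ht.le]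
    exact ((aux_cont H ζ p C).mono (fun x hx => hx.1)).aestronglyMeasurable measurableSet_Ioc
  · rw [Set.uIoc_of_le ht.le]
    filter_upwards [ae_restrict_mem measurableSet_Ioc] with r hr
    rw [aux_sq _ _ _ _ _ hr.1, norm_mul]
    apply mul_le_of_le_one_right (norm_nonneg _)
    have h1 : 1 ≤ max (ζ * Real.log (1 / r)) 1 := le_max_right _ _
    rw [Real.norm_of_nonneg (by positivity)]
    exact Real.rpow_le_one_of_one_le_of_nonpos h1 (by linarith)

theorem aux_deriv (H ζ p C : ℝ) (hH0 : 0 < H) (hp : 1 < p) (t : ℝ) (ht : 0 < t) :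
    HasDerivAt (fun t => ∫ s in (0 : ℝ)..t, (logKernel H ζ p C s) ^ 2)
      ((logKernel H ζ p C t) ^ 2) t := by
  apply intervalIntegral.integral_hasDerivAt_right (aux_int H ζ p C hH0 hp t ht)
  · exact (aux_cont H ζ p C).stronglyMeasurableAtFilter isOpen_Ioi t ht
  · exact (aux_cont H ζ p C).continuousAt (Ioi_mem_nhds ht)

theorem aux_zero (H ζ p C : ℝ) (hH0 : 0 < H) (hp : 1 < p) :
    Tendsto (fun t => ∫ s in (0 : ℝ)..t, (logKernel H ζ p C s) ^ 2) (𝓝[>] 0) (𝓝 0) := by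
  have h := intervalIntegral.continuousOn_primitive_interval'
    (aux_int H ζ p C hH0 hp 1 one_pos) (a := 0) (by simp)
  have h0 := h 0 (by simp)
  have h1 : Tendsto (fun t => ∫ s in (0 : ℝ)..t, (logKernel H ζ p C s) ^ 2)
      (𝓝[Set.uIcc 0 1] 0) (𝓝 0) := by
    simpa [ContinuousWithinAt] using h0
  rw [Set.uIcc_of_le zero_le_one] at h1
  refine h1.mono_left ?_
  rw [← nhdsWithin_Ioo_eq_nhdsGT (zero_lt_one (α := ℝ))]
  exact nhdsWithin_mono _ Set.Ioo_subset_Icc_self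

theorem aux_first (H ζ p C : ℝ) (hH0 : 0 < H) 
    (hζ : 0 < ζ) (hp : 1 < p) (hC : 0 < C) :
    Tendsto
      (fun t : ℝ =>
        (∫ s in (0 : ℝ)..t, (logKernel H ζ p C s) ^ 2)
          / (C ^ 2 * ζ ^ (-(2 * p)) / (2 * H) * (Real.log (1 / t)) ^ (-(2 * p)) * t ^ (2 * H)))
      (nhdsWithin 0 (Set.Ioi 0)) (nhds 1) := by
  set A := C ^ 2 * ζ ^ (-(2 * p)) / (2 * H) with hA
  have hζp : 0 < ζ ^ (-(2 * p)) := Real.rpow_pos_of_pos hζ _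
  have hApos : 0 < A := by positivity
  have hpos : ∀ᶠ t : ℝ in 𝓝[>] 0, 0 < t := self_mem_nhdsWithin
  have hL : ∀ᶠ t : ℝ in 𝓝[>] 0, 0 < Real.log (1 / t) := aux_log.eventually_gt_atTop 0
  have hL2 : ∀ᶠ t : ℝ in 𝓝[>] 0, 1 / ζ < Real.log (1 / t) := aux_log.eventually_gt_atTop _
  apply HasDerivAt.lhopital_zero_nhdsGT (f' := fun t => (logKernel H ζ p C t) ^ 2)
    (g' := fun t => A * (t ^ (2 * H - 1) * (Real.log (1 / t)) ^ (-(2 * p))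
      * (2 * H + 2 * p / Real.log (1 / t))))
  · filter_upwards [hpos] with t ht using aux_deriv H ζ p C hH0 hp t ht
  · filter_upwards [hpos, hL] with t ht hLt
    have d1 : HasDerivAt (fun t : ℝ => Real.log (1 / t)) (-(1 / t)) t := by
      have := (Real.hasDerivAt_log ht.ne').neg
      simp only [one_div, Real.log_inv]
      exact this
    have d2 := d1.rpow_const (p := -(2 * p)) (Or.inl hLt.ne')
    have d3 := Real.hasDerivAt_rpow_const (x := t) (p := 2 * H) (Or.inl ht.ne')
    refine ((d2.const_mul A).mul d3).congr_deriv ?_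
    rw [Real.rpow_sub_one hLt.ne', Real.rpow_sub_one ht.ne']
    field_simp
    ring
  · filter_upwards [hpos, hL] with t ht hLt
    positivity
  · exact aux_zero H ζ p C hH0 hp
  · have h1 : Tendsto (fun t : ℝ => t ^ (2 * H)) (𝓝[>] 0) (𝓝 0) := by
      have := (Real.continuousAt_rpow_const 0 (2 * H) (Or.inr (by linarith))).tendsto
      rw [Real.zero_rpow (by linarith)] at this
      exact this.mono_left nhdsWithin_le_nhds
    have h2 := (tendsto_rpow_neg_atTop (y := 2 * p) (by linarith)).comp aux_log
    simpa using (h2.const_mul A).mul h1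
  · have h1 : Tendsto (fun t : ℝ => 2 * H / (2 * H + 2 * p / Real.log (1 / t))) (𝓝[>] 0) (𝓝 1) := by
      have h2 : Tendsto (fun t : ℝ => 2 * H + 2 * p / Real.log (1 / t)) (𝓝[>] 0) (𝓝 (2 * H + 0)) :=
        tendsto_const_nhds.add (aux_log.const_div_atTop _)
      have h3 := (tendsto_const_nhds (x := 2 * H)).div h2 (by simpa using hH0.ne')
      rwa [add_zero, div_self (by linarith)] at h3
    refine h1.congr' ?_
    filter_upwards [hpos, hL, hL2] with t ht hLt hLt2
    have hm : max (ζ * Real.log (1 / t)) 1 = ζ * Real.log (1 / t) := by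
      apply max_eq_left
      rw [div_lt_iff₀ hζ] at hLt2
      linarith
    rw [aux_sq _ _ _ _ _ ht, hm, Real.mul_rpow hζ.le hLt.le, hA]
    have e1 : 0 < t ^ (2 * H - 1) := Real.rpow_pos_of_pos ht _
    have e2 : 0 < Real.log (1 / t) ^ (-(2 * p)) := Real.rpow_pos_of_pos hLt _
    have e3 : 0 < 2 * H + 2 * p / Real.log (1 / t) := by positivity
    generalize 2 * H + 2 * p / Real.log (1 / t) = X at *
    generalize Real.log (1 / t) ^ (-(2 * p)) = Y at *
    generalize t ^ (2 * H - 1) = Z at *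
    generalize ζ ^ (-(2 * p)) = W at *
    field_simp

theorem variance_small_time_asymptotic (H ζ p C : ℝ) (hH0 : 0 < H) (hH : H < 1/2)
    (hζ : 0 < ζ) (hp : 1 < p) (hC : 0 < C) :
    Tendsto
      (fun t : ℝ =>
        (∫ s in (0 : ℝ)..t, (logKernel H ζ p C s) ^ 2)
          / (C ^ 2 * ζ ^ (-(2 * p)) / (2 * H) * (Real.log (1 / t)) ^ (-(2 * p)) * t ^ (2 * H)))
      (nhdsWithin 0 (Set.Ioi 0)) (nhds 1)
    ∧ ∀ l : ℝ, 0 < l →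
        Tendsto (fun t : ℝ => sdev H ζ p C (l * t) / sdev H ζ p C t)
          (nhdsWithin 0 (Set.Ioi 0)) (nhds (l ^ H)) := by
  have hfirst := aux_first H ζ p C hH0 hζ hp hC
  refine ⟨hfirst, ?_⟩
  intro l hl
  have hpos : ∀ᶠ t : ℝ in 𝓝[>] 0, 0 < t := self_mem_nhdsWithin
  have hL : ∀ᶠ t : ℝ in 𝓝[>] 0, 0 < Real.log (1 / t) := aux_log.eventually_gt_atTop 0
  have hlt : Tendsto (fun t : ℝ => l * t) (𝓝[>] 0) (𝓝[>] 0) := by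
    apply tendsto_nhdsWithin_of_tendsto_nhds_of_eventually_within
    · have : Tendsto (fun t : ℝ => l * t) (𝓝 0) (𝓝 (l * 0)) := tendsto_id.const_mul l
      rw [mul_zero] at this
      exact this.mono_left nhdsWithin_le_nhds
    · filter_upwards [hpos] with t ht
      exact mul_pos hl ht
  have hζp : 0 < ζ ^ (-(2 * p)) := Real.rpow_pos_of_pos hζ _
  have hquot := (hfirst.comp hlt).div hfirst one_ne_zero
  have hLr : Tendsto (fun t : ℝ => Real.log (1 / (l * t)) / Real.log (1 / t)) (𝓝[>] 0) (𝓝 1) := by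
    have h2 : Tendsto (fun t : ℝ => 1 + Real.log (1 / l) / Real.log (1 / t)) (𝓝[>] 0) (𝓝 (1 + 0)) :=
      tendsto_const_nhds.add (aux_log.const_div_atTop _)
    rw [add_zero] at h2
    refine h2.congr' ?_
    filter_upwards [hpos, hL] with t ht hLt
    have : Real.log (1 / (l * t)) = Real.log (1 / t) + Real.log (1 / l) := by
      rw [← Real.log_mul (by positivity) (by positivity)]
      congr 1
      field_simp
    rw [this, add_div, div_self hLt.ne']
  have hLp := (hLr.rpow_const (p := -(2 * p)) (Or.inl one_ne_zero)).mul_const (l ^ (2 * H))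
  have hF := hquot.mul hLp
  have hS := hF.sqrt
  have hval : Real.sqrt (1 / 1 * (1 ^ (-(2 * p)) * l ^ (2 * H))) = l ^ H := by
    rw [Real.one_rpow, div_one, one_mul, one_mul, mul_comm, Real.rpow_mul hl.le, Real.rpow_two,
      Real.sqrt_sq (Real.rpow_nonneg hl.le _)]
  rw [hval] at hS
  refine hS.congr' ?_
  filter_upwards [hpos, hL, hlt.eventually hL] with t ht hLt hLlt
  unfold sdev
  have hnn : 0 ≤ ∫ s in (0 : ℝ)..(l * t), (logKernel H ζ p C s) ^ 2 :=
    intervalIntegral.integral_nonneg (by positivity) (fun _ _ => sq_nonneg _)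
  rw [← Real.sqrt_div hnn]
  congr 1
  simp only [Function.comp, Pi.div_apply]
  rw [Real.div_rpow hLlt.le hLt.le, Real.mul_rpow hl.le ht.le]
  have e1 : 0 < Real.log (1 / t) ^ (-(2 * p)) := Real.rpow_pos_of_pos hLt _
  have e2 : 0 < Real.log (1 / (l * t)) ^ (-(2 * p)) := Real.rpow_pos_of_pos hLlt _
  have e3 : 0 < t ^ (2 * H) := Real.rpow_pos_of_pos ht _
  have e4 : 0 < l ^ (2 * H) := Real.rpow_pos_of_pos hl _
  generalize Real.log (1 / t) ^ (-(2 * p)) = Y at *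
  generalize Real.log (1 / (l * t)) ^ (-(2 * p)) = Z at *
  generalize t ^ (2 * H) = T at *
  generalize l ^ (2 * H) = M at *
  generalize ζ ^ (-(2 * p)) = W at *
  generalize (∫ s in (0 : ℝ)..(l * t), (logKernel H ζ p C s) ^ 2) = I at *
  generalize (∫ s in (0 : ℝ)..t, (logKernel H ζ p C s) ^ 2) = J at *
  by_cases hJ : J = 0
  · simp [hJ]
  · field_simp
end

section
/- Let H ∈ [0,1/2), ζ > 0, p > 1, C > 0. As t → 0⁺, ∫₀ᵗ K(s) ds ∼ ( C ζ^{−p} / (H+1/2) ) · (log(1/t))^{−p} · t^{H+1/2}. -/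
open MeasureTheory Filter

lemma logKernel_measurable (H ζ p C : ℝ) : Measurable (logKernel H ζ p C) := by
  unfold logKernel
  fun_prop

lemma logKernel_intervalIntegrable (H ζ p C : ℝ) (hH0 : 0 ≤ H) (hp : 1 < p) (hC : 0 < C)
    (a b : ℝ) : IntervalIntegrable (logKernel H ζ p C) volume a b := by
  have h1 : IntervalIntegrable (fun r : ℝ => C * r ^ (H - 1/2)) volume a b :=
    (intervalIntegral.intervalIntegrable_rpow' (by linarith)).const_mul C
  refine h1.mono_fun (logKernel_measurable H ζ p C).aestronglyMeasurable ?_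
  refine Eventually.of_forall fun r => ?_
  simp only [logKernel]
  rw [norm_mul]
  refine mul_le_of_le_one_right (norm_nonneg _) ?_
  have hm : (1:ℝ) ≤ max (ζ * Real.log (1 / r)) 1 := le_max_right _ _
  rw [Real.norm_of_nonneg (Real.rpow_nonneg (by linarith) _)]
  exact Real.rpow_le_one_of_one_le_of_nonpos hm (by linarith)

lemma logKernel_continuousAt (H ζ p C : ℝ) {r : ℝ} (hr : 0 < r) :
    ContinuousAt (logKernel H ζ p C) r := by
  unfold logKernel
  have hm : (0:ℝ) < max (ζ * Real.log (1 / r)) 1 := lt_max_of_lt_right one_pos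
  have hlog : ContinuousAt (fun r : ℝ => Real.log (1 / r)) r :=
    ContinuousAt.log (continuousAt_const.div continuousAt_id hr.ne') (by positivity)
  refine ContinuousAt.mul (continuousAt_const.mul
    (continuousAt_id.rpow_const (Or.inl hr.ne'))) ?_
  exact ((continuousAt_const.mul hlog).max continuousAt_const).rpow_const (Or.inl hm.ne')

lemma tendsto_log_one_div : Tendsto (fun t : ℝ => Real.log (1 / t))
    (nhdsWithin 0 (Set.Ioi 0)) atTop := by
  simp only [one_div]
  exact Real.tendsto_log_atTop.comp tendsto_inv_nhdsGT_zero

theorem mean_integrated_kernel_small_time (H ζ p C : ℝ) (hH0 : 0 ≤ H) (hH : H < 1/2)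
    (hζ : 0 < ζ) (hp : 1 < p) (hC : 0 < C) :
    Tendsto
      (fun t : ℝ =>
        (∫ s in (0 : ℝ)..t, logKernel H ζ p C s)
          / (C * ζ ^ (-p) / (H + 1/2) * (Real.log (1 / t)) ^ (-p) * t ^ (H + 1/2)))
      (nhdsWithin 0 (Set.Ioi 0)) (nhds 1) := by
  have ha : 0 < H + 1/2 := by linarith
  have hζp : 0 < ζ ^ (-p) := Real.rpow_pos_of_pos hζ _
  have hev : ∀ᶠ t : ℝ in nhdsWithin 0 (Set.Ioi 0), 0 < t ∧ 1 / ζ < Real.log (1 / t) :=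
    (eventually_mem_nhdsWithin).and (tendsto_log_one_div.eventually_gt_atTop _)
  have hpos : ∀ t : ℝ, 0 < t ∧ 1 / ζ < Real.log (1 / t) →
      0 < C * ζ ^ (-p) * (Real.log (1 / t)) ^ (-p) * t ^ (H - 1/2) ∧
      0 < 1 + p / ((H + 1/2) * Real.log (1 / t)) := by
    rintro t ⟨ht, hL⟩
    have hL0 : 0 < Real.log (1 / t) := lt_trans (by positivity) hL
    constructor <;> positivity
  refine HasDerivAt.lhopital_zero_nhdsGT (f' := logKernel H ζ p C)
    (g' := fun t => C * ζ ^ (-p) * (Real.log (1 / t)) ^ (-p) * t ^ (H - 1/2) *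
      (1 + p / ((H + 1/2) * Real.log (1 / t)))) ?_ ?_ ?_ ?_ ?_ ?_
  · filter_upwards [hev] with t ht
    exact intervalIntegral.integral_hasDerivAt_right
      (logKernel_intervalIntegrable H ζ p C hH0 hp hC 0 t)
      (logKernel_measurable H ζ p C).stronglyMeasurable.stronglyMeasurableAtFilter
      (logKernel_continuousAt H ζ p C ht.1)
  · filter_upwards [hev] with t ht
    obtain ⟨ht, hL⟩ := ht
    have hL0 : 0 < Real.log (1 / t) := lt_trans (by positivity) hL
    have hl : HasDerivAt (fun t : ℝ => Real.log (1 / t)) (-t⁻¹) t := by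
      simp only [one_div, Real.log_inv]
      exact (Real.hasDerivAt_log ht.ne').neg
    have h1 := ((hl.rpow_const (p := -p) (Or.inl hL0.ne')).const_mul
      (C * ζ ^ (-p) / (H + 1/2))).mul
      (Real.hasDerivAt_rpow_const (p := H + 1/2) (Or.inl ht.ne'))
    refine h1.congr_deriv ?_
    have e1 : t ^ (H + 1/2) = t ^ (H - 1/2) * t := by
      rw [← Real.rpow_add_one ht.ne']; congr 1; ring
    have e2 : t ^ (H + 1/2 - 1) = t ^ (H - 1/2) := by congr 1; ring
    rw [e1, e2, Real.rpow_sub_one hL0.ne']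
    generalize Real.log (1 / t) = L at *
    generalize t ^ (H - 1/2) = x at *
    generalize L ^ (-p) = y at *
    generalize ζ ^ (-p) = z at *
    have ha' := ha.ne'
    generalize H + 1/2 = a at *
    field_simp
    ring
  · filter_upwards [hev] with t ht
    have := hpos t ht
    exact (mul_pos this.1 this.2).ne'
  · have h := intervalIntegral.continuous_primitive
      (logKernel_intervalIntegrable H ζ p C hH0 hp hC) 0
    have := h.tendsto 0
    rw [intervalIntegral.integral_same] at this
    exact this.mono_left nhdsWithin_le_nhds
  · have h1 : Tendsto (fun t : ℝ => (Real.log (1 / t)) ^ (-p))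
        (nhdsWithin 0 (Set.Ioi 0)) (nhds 0) :=
      (tendsto_rpow_neg_atTop (by linarith)).comp tendsto_log_one_div
    have h2 : Tendsto (fun t : ℝ => t ^ (H + 1/2)) (nhdsWithin 0 (Set.Ioi 0)) (nhds 0) := by
      have := (Real.continuousAt_rpow_const 0 (H + 1/2) (Or.inr ha.le)).tendsto
      rw [Real.zero_rpow ha.ne'] at this
      exact this.mono_left nhdsWithin_le_nhds
    simpa using (h1.const_mul (C * ζ ^ (-p) / (H + 1/2))).mul h2
  · have h1 : Tendsto (fun t : ℝ => (1 + p / ((H + 1/2) * Real.log (1 / t)))⁻¹)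
        (nhdsWithin 0 (Set.Ioi 0)) (nhds 1) := by
      have := (((tendsto_log_one_div.const_mul_atTop ha).const_div_atTop p).const_add 1).inv₀
        (by norm_num)
      simpa using this
    refine h1.congr' ?_
    filter_upwards [hev] with t ht
    obtain ⟨hA, hB⟩ := hpos t ht
    obtain ⟨ht, hL⟩ := ht
    have hL0 : 0 < Real.log (1 / t) := lt_trans (by positivity) hL
    have hm : max (ζ * Real.log (1 / t)) 1 = ζ * Real.log (1 / t) := by
      apply max_eq_left
      rw [div_lt_iff₀ hζ] at hL
      linarith
    have hK : logKernel H ζ p C t =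
        C * ζ ^ (-p) * (Real.log (1 / t)) ^ (-p) * t ^ (H - 1/2) := by
      rw [logKernel, hm, Real.mul_rpow hζ.le hL0.le]
      ring
    rw [hK, div_mul_cancel_left₀ hA.ne']
end
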